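/- (Leibniz rule for the classical Riemann–Liouville derivative.) Let 0 < α < 1 and a < b. Suppose f, g : ℝ → ℝ are real-analytic with everywhere-convergent power series. Then for every x ∈ (a,b): (^{RL}D^{α}(f·g))(x) = Σ_{m=0}^∞ binom(α, m) f⁽ᵐ⁾(x) (^{RL}D^{α−m} g)(x), where f⁽ᵐ⁾ is the ordinary m-th derivative of f and the series converges. -/

import Mathlib

open Real

/-- Generalized binomial coefficient `binom(γ, n) = γ(γ-1)⋯(γ-n+1)/n!`. -/
noncomputable def genBinom (γ : ℝ) (n : ℕ) : ℝ :=
  (∏ i ∈ Finset.range n, (γ - (i : ℝ))) / (n.factorial : ℝ)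

/-- Ψ-Riemann–Liouville fractional integral of order `α` with base point `a`;
by convention the order-0 integral is the identity. -/
noncomputable def psiI (a : ℝ) (Ψ f : ℝ → ℝ) (α : ℝ) (x : ℝ) : ℝ :=
  if α = 0 then f x
  else (Real.Gamma α)⁻¹ * ∫ t in a..x, deriv Ψ t * (Ψ x - Ψ t) ^ (α - 1) * f t

/-- Ψ-Riemann–Liouville fractional derivative of order `γ` (for `γ ≤ 0` it is the
fractional integral of order `-γ`, the order-0 case being the identity). -/
noncomputable def psiRLD (a : ℝ) (Ψ f : ℝ → ℝ) (γ : ℝ) (x : ℝ) : ℝ :=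
  if γ ≤ 0 then psiI a Ψ f (-γ) x
  else (deriv Ψ x)⁻¹ * deriv (fun y => psiI a Ψ f (1 - γ) y) x

/-- Ψ-Caputo fractional derivative of order `γ` (for `γ ≤ 0` it is the
fractional integral of order `-γ`). -/
noncomputable def psiCD (a : ℝ) (Ψ f : ℝ → ℝ) (γ : ℝ) (x : ℝ) : ℝ :=
  if γ ≤ 0 then psiI a Ψ f (-γ) x
  else psiI a Ψ (fun t => (deriv Ψ t)⁻¹ * deriv f t) (1 - γ) x

/-- Ψ-Hilfer fractional derivative of order `α` and type `β`. -/
noncomputable def psiHD (a : ℝ) (Ψ f : ℝ → ℝ) (α β : ℝ) (x : ℝ) : ℝ :=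
  psiI a Ψ
    (fun y => (deriv Ψ y)⁻¹ * deriv (fun z => psiI a Ψ f ((1 - β) * (1 - α)) z) y)
    (β * (1 - α)) x

/-- Classical Riemann–Liouville fractional integral with base point `a`. -/
noncomputable def rlI (a : ℝ) (α : ℝ) (f : ℝ → ℝ) (x : ℝ) : ℝ :=
  if α = 0 then f x
  else (Real.Gamma α)⁻¹ * ∫ t in a..x, (x - t) ^ (α - 1) * f t

/-- Classical Riemann–Liouville fractional derivative (fractional integral for `γ ≤ 0`). -/
noncomputable def rlD (a : ℝ) (γ : ℝ) (f : ℝ → ℝ) (x : ℝ) : ℝ :=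
  if γ ≤ 0 then rlI a (-γ) f x
  else deriv (fun y => rlI a (1 - γ) f y) x

/-- Classical Caputo fractional derivative (fractional integral for `γ ≤ 0`). -/
noncomputable def capD (a : ℝ) (γ : ℝ) (f : ℝ → ℝ) (x : ℝ) : ℝ :=
  if γ ≤ 0 then rlI a (-γ) f x
  else rlI a (1 - γ) (deriv f) x

/-- Classical Hilfer fractional derivative of order `α` and type `β`. -/
noncomputable def hilD (a : ℝ) (α β : ℝ) (f : ℝ → ℝ) (x : ℝ) : ℝ :=
  rlI a (β * (1 - α))
    (fun y => deriv (fun z => rlI a ((1 - β) * (1 - α)) f z) y) x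

/-- Hadamard fractional integral with base point `a`. -/
noncomputable def hadI (a : ℝ) (α : ℝ) (f : ℝ → ℝ) (x : ℝ) : ℝ :=
  if α = 0 then f x
  else (Real.Gamma α)⁻¹ * ∫ t in a..x, (Real.log x - Real.log t) ^ (α - 1) * f t / t

/-- Caputo–Hadamard fractional derivative (Hadamard fractional integral for `γ ≤ 0`). -/
noncomputable def chD (a : ℝ) (γ : ℝ) (f : ℝ → ℝ) (x : ℝ) : ℝ :=
  if γ ≤ 0 then hadI a (-γ) f x
  else hadI a (1 - γ) (fun t => t * deriv f t) x

/-- `h` is real-analytic with a power series converging on all of `ℝ`. -/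
def EntireReal (h : ℝ → ℝ) : Prop :=
  ∃ p : FormalMultilinearSeries ℝ ℝ ℝ, HasFPowerSeriesOnBall h p 0 ⊤

lemma hasSum_cast {u v : ℕ → ℝ} {A B : ℝ} (h : HasSum u A) (e : ∀ m, v m = u m) (e2 : B = A) :
    HasSum v B := by
  rw [e2, funext e]
  exact h

open MeasureTheory in
lemma rl_kernel_integrable {α : ℝ} (hα1 : α < 1) (a y : ℝ) :
    IntervalIntegrable (fun t => (y - t) ^ (-α)) volume a y := by
  have h := (intervalIntegral.intervalIntegrable_rpow' (a := y - a) (b := 0) (r := -α)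
    (by linarith)).comp_sub_left y
  simpa using h

open MeasureTheory in
lemma rl_deriv_scaled {α : ℝ} (hα1 : α < 1) {a x : ℝ} (hax : a < x)
    {h h' : ℝ → ℝ} (hd : ∀ t, HasDerivAt h (h' t) t) (hc : Continuous h') :
    ∃ D : ℝ, HasDerivAt (fun y => ∫ t in a..y, (y - t) ^ (-α) * h t) D x ∧
      (x - a) * D = ∫ t in a..x, (x - t) ^ (-α) * ((1 - α) * h t + (t - a) * h' t) := by
  have hhc : Continuous h := continuous_iff_continuousAt.2 fun t => (hd t).continuousAt
  have scale : ∀ (k : ℝ → ℝ) (y : ℝ), a < y → ∫ t in a..y, (y - t) ^ (-α) * k t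
      = (y - a) ^ (1 - α) * ∫ s in (0:ℝ)..1, (1 - s) ^ (-α) * k (a + (y - a) * s) := by
    intro k y hy
    have h1 := intervalIntegral.mul_integral_comp_add_mul (a := 0) (b := 1)
      (f := fun t => (y - t) ^ (-α) * k t) (y - a) a
    simp only [mul_zero, mul_one, add_zero, add_sub_cancel] at h1
    rw [← h1, sub_eq_add_neg 1 α, Real.rpow_add (by linarith), Real.rpow_one, mul_assoc,
      ← intervalIntegral.integral_const_mul ((y - a) ^ (-α))]
    congr 1
    apply intervalIntegral.integral_congr
    intro s hs
    rw [Set.uIcc_of_le zero_le_one] at hs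
    simp only
    rw [show y - (a + (y - a) * s) = (y - a) * (1 - s) by ring,
      Real.mul_rpow (by linarith) (by linarith [hs.2])]
    ring
  have hker := rl_kernel_integrable hα1 0 1
  obtain ⟨C, hC⟩ := (isCompact_Icc (a := a) (b := x + 1)).exists_bound_of_continuousOn
    hc.continuousOn
  have hpar := (intervalIntegral.hasDerivAt_integral_of_dominated_loc_of_deriv_le
    (μ := volume) (a := 0) (b := 1) (x₀ := x) (s := Set.Ioo a (x + 1))
    (F := fun y s => (1 - s) ^ (-α) * h (a + (y - a) * s))
    (F' := fun y s => (1 - s) ^ (-α) * (s * h' (a + (y - a) * s)))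
    (bound := fun s => (1 - s) ^ (-α) * C)
    (Ioo_mem_nhds hax (by linarith))
    (Filter.Eventually.of_forall fun y => (hker.mul_continuousOn (by fun_prop)).def'.1)
    (hker.mul_continuousOn (by fun_prop))
    (hker.mul_continuousOn (by fun_prop)).def'.1
    (Filter.Eventually.of_forall fun s hs y hy => by
      rw [Set.uIoc_of_le zero_le_one] at hs
      rw [norm_mul, Real.norm_of_nonneg (Real.rpow_nonneg (by linarith [hs.2]) _)]
      refine mul_le_mul_of_nonneg_left ?_ (Real.rpow_nonneg (by linarith [hs.2]) _)
      have hya : 0 < y - a := by linarith [hy.1]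
      have := hC (a + (y - a) * s) ⟨by nlinarith [hs.1], by nlinarith [hs.2, hy.2]⟩
      rw [norm_mul, Real.norm_of_nonneg hs.1.le]
      nlinarith [norm_nonneg (h' (a + (y - a) * s)), hs.1, hs.2])
    (hker.mul_const C)
    (Filter.Eventually.of_forall fun s hs y hy => by
      have h1 : HasDerivAt (fun y : ℝ => a + (y - a) * s) s y := by
        simpa using (((hasDerivAt_id y).sub_const a).mul_const s).const_add a
      have h2 := ((hd (a + (y - a) * s)).comp y h1).const_mul ((1 - s) ^ (-α))
      exact h2.congr_deriv (by ring))).2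
  have hpow : HasDerivAt (fun y : ℝ => (y - a) ^ (1 - α)) ((1 - α) * (x - a) ^ (-α)) x := by
    have := ((hasDerivAt_id x).sub_const a).rpow_const (p := 1 - α) (Or.inl (by simp; linarith))
    exact this.congr_deriv (by rw [show 1 - α - 1 = -α by ring]; simp only [id]; ring)
  refine ⟨_, (hpow.mul hpar).congr_of_eventuallyEq ?_, ?_⟩
  · filter_upwards [Ioi_mem_nhds hax] with y hy
    exact scale h y hy
  · have hkx := rl_kernel_integrable hα1 a x
    have e1 : ∀ t, (x - t) ^ (-α) * ((1 - α) * h t + (t - a) * h' t)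
      = (1 - α) * ((x - t) ^ (-α) * h t) + (x - t) ^ (-α) * ((t - a) * h' t) := by
      intro t; ring
    simp_rw [e1]
    rw [intervalIntegral.integral_add ((hkx.mul_continuousOn (by fun_prop)).const_mul _)
      (hkx.mul_continuousOn (by fun_prop)), intervalIntegral.integral_const_mul,
      scale h x hax, scale (fun t => (t - a) * h' t) x hax]
    have e2 : ∀ s, (1 - s) ^ (-α) * ((a + (x - a) * s - a) * h' (a + (x - a) * s))
      = (x - a) * ((1 - s) ^ (-α) * (s * h' (a + (x - a) * s))) := by intro s; ring
    simp_rw [e2]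
    rw [intervalIntegral.integral_const_mul]
    rw [sub_eq_add_neg 1 α, Real.rpow_add (by linarith), Real.rpow_one]
    ring

open MeasureTheory in
lemma rl_deriv_vanish {α : ℝ} (hα0 : 0 < α) (hα1 : α < 1) {a x : ℝ} (hax : a < x)
    {h h' k : ℝ → ℝ} (hd : ∀ t, HasDerivAt h (h' t) t) (hc : Continuous h') (hk : Continuous k)
    (hhk : ∀ t, h t = (x - t) * k t) :
    HasDerivAt (fun y => ∫ t in a..y, (y - t) ^ (-α) * h t)
      (-α * ∫ t in a..x, (x - t) ^ (-α) * k t) x := by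
  have hhc : Continuous h := continuous_iff_continuousAt.2 fun t => (hd t).continuousAt
  have hkx := rl_kernel_integrable hα1 a x
  obtain ⟨D, hD, hDe⟩ := rl_deriv_scaled hα1 hax hd hc
  have hzero : ∫ t in a..x, (x - t) ^ (-α) * (h t + (t - a) * h' t + α * ((t - a) * k t)) = 0 := by
    rw [intervalIntegral.integral_eq_sub_of_hasDerivAt_of_le
      (f := fun t => (x - t) ^ (-α) * ((t - a) * h t)) hax.le]
    · simp [hhk]
    · have : ContinuousOn (fun t => (x - t) ^ (1 - α) * ((t - a) * k t)) (Set.Icc a x) := by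
        refine ContinuousOn.mul ?_ (by fun_prop)
        exact ContinuousOn.rpow_const (by fun_prop) fun t _ => Or.inr (by linarith)
      refine this.congr fun t ht => ?_
      simp only
      rcases ht.2.eq_or_lt with rfl | hlt
      · simp [hhk, Real.zero_rpow (show 1 - α ≠ 0 by linarith)]
      · rw [sub_eq_add_neg 1 α, Real.rpow_add (by linarith), Real.rpow_one, hhk]
        ring
    · intro t ht
      have hp : HasDerivAt (fun t : ℝ => (x - t) ^ (-α)) (α * (x - t) ^ (-α - 1)) t := by
        have := ((hasDerivAt_id t).const_sub x).rpow_const (p := -α)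
          (Or.inl (by simp; linarith [ht.2]))
        exact this.congr_deriv (by simp only [id]; ring)
      have := hp.mul (((hasDerivAt_id t).sub_const a).mul (hd t))
      refine this.congr_deriv ?_
      have e : (x - t) ^ (-α) = (x - t) ^ (-α - 1) * (x - t) := by
        rw [Real.rpow_sub_one (by linarith [ht.2])]
        field_simp [show x - t ≠ 0 by linarith [ht.2]]
      simp only [id, Pi.mul_apply]
      linear_combination -(α * (t - a) * k t) * e + α * (x-t)^(-α-1) * (t-a) * hhk t
    · exact hkx.mul_continuousOn (by fun_prop)
  have key : (x - a) * D = (x - a) * (-α * ∫ t in a..x, (x - t) ^ (-α) * k t) := by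
    rw [hDe, ← sub_zero (∫ t in a..x, _), ← hzero, ← intervalIntegral.integral_sub
      (hkx.mul_continuousOn (by fun_prop)) (hkx.mul_continuousOn (by fun_prop)),
      ← intervalIntegral.integral_const_mul, ← intervalIntegral.integral_const_mul]
    congr 1
    ext t
    rw [hhk]; ring
  rw [← mul_left_cancel₀ (by linarith) key]
  exact hD

lemma entire_taylor {f : ℝ → ℝ} (hf : EntireReal f) (x y : ℝ) :
    HasSum (fun m : ℕ => iteratedDeriv m f x / (m.factorial : ℝ) * y ^ m) (f (x + y)) := by
  obtain ⟨p, hp⟩ := hf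
  have h1 := hp.changeOrigin (y := x) (by simp)
  rw [zero_add] at h1
  have h2 := h1.hasSum_iteratedFDeriv (y := y) (by simp)
  refine hasSum_cast h2 (fun m => ?_) rfl
  rw [iteratedFDeriv_apply_eq_iteratedDeriv_mul_prod]
  simp
  ring

lemma entire_contDiff {f : ℝ → ℝ} (hf : EntireReal f) : ContDiff ℝ 1 f := by
  obtain ⟨p, hp⟩ := hf
  have := hp.analyticOnNhd
  rw [Metric.eball_top] at this
  exact this.contDiff

lemma genBinom_gamma {α : ℝ} (hα1 : α < 1) (m : ℕ) :
    genBinom α (m + 1) * (Real.Gamma (m + 1 - α))⁻¹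
      = (-1) ^ m * α * (Real.Gamma (1 - α))⁻¹ / ((m + 1).factorial : ℝ) := by
  have key : ∀ m : ℕ, (∏ i ∈ Finset.range (m + 1), (α - (i : ℝ))) * Real.Gamma (1 - α)
      = (-1) ^ m * α * Real.Gamma (m + 1 - α) := by
    intro m
    induction m with
    | zero => simp
    | succ m ih =>
      have hm : (0:ℝ) ≤ m := m.cast_nonneg
      rw [Finset.prod_range_succ]
      push_cast
      rw [show (m:ℝ) + 1 + 1 - α = (m + 1 - α) + 1 by ring, Real.Gamma_add_one (by linarith)]
      linear_combination (α - (m + 1)) * ih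
  have hm : (0:ℝ) ≤ m := m.cast_nonneg
  have g1 : Real.Gamma (1 - α) ≠ 0 := (Real.Gamma_pos_of_pos (by linarith)).ne'
  have g2 : Real.Gamma (m + 1 - α) ≠ 0 := (Real.Gamma_pos_of_pos (by linarith)).ne'
  have := key m
  unfold genBinom
  field_simp
  linear_combination this

open MeasureTheory in
lemma rl_hasSum {α : ℝ} (hα0 : 0 < α) (hα1 : α < 1) {a x : ℝ} (hax : a < x)
    {f g : ℝ → ℝ} (hf : EntireReal f) (hg : Continuous g) :
    HasSum (fun m : ℕ => ∫ t in a..x, (x - t) ^ (-α) *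
        (iteratedDeriv (m + 1) f x / ((m + 1).factorial : ℝ) * (t - x) ^ m * g t))
      (∫ t in a..x, (x - t) ^ (-α) * (dslope f x t * g t)) := by
  have hkx := rl_kernel_integrable hα1 a x
  set d : ℕ → ℝ := fun m => iteratedDeriv m f x / (m.factorial : ℝ) with hd
  have hsum : ∀ y : ℝ, y ≠ 0 → HasSum (fun m : ℕ => d (m + 1) * y ^ m) ((f (x + y) - f x) / y) := by
    intro y hy
    have h1 := (hasSum_nat_add_iff' 1).2 (entire_taylor hf x y)
    have h2 := h1.div_const y
    simp only [Finset.range_one, Finset.sum_singleton, iteratedDeriv_zero, Nat.factorial_zero,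
      Nat.cast_one, div_one, pow_zero, mul_one] at h2
    refine hasSum_cast h2 (fun m => ?_) rfl
    simp only [hd, pow_succ]
    field_simp
  have hS : Summable fun m : ℕ => |d (m + 1)| * (x - a) ^ m := by
    have := (hsum (x - a) (by linarith)).summable.abs
    simpa [abs_mul, abs_pow, abs_of_pos (sub_pos.2 hax)] using this
  apply intervalIntegral.hasSum_integral_of_dominated_convergence
    (fun m t => |d (m + 1)| * (x - a) ^ m * ‖(x - t) ^ (-α) * g t‖)
  · intro m
    exact (hkx.mul_continuousOn (by fun_prop)).def'.1
  · intro m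
    refine Filter.Eventually.of_forall fun t ht => ?_
    rw [Set.uIoc_of_le hax.le] at ht
    have h1 : |t - x| ^ m ≤ (x - a) ^ m := by
      refine pow_le_pow_left₀ (abs_nonneg _) ?_ m
      rw [abs_le]; constructor <;> linarith [ht.1, ht.2]
    simp only [Real.norm_eq_abs, abs_mul, abs_pow]
    calc _ = |d (m+1)| * |t - x| ^ m * (|(x - t) ^ (-α)| * |g t|) := by simp only [hd]; ring
      _ ≤ _ := by gcongr
  · exact Filter.Eventually.of_forall fun t _ => hS.mul_right _
  · simp_rw [tsum_mul_right]
    exact (hkx.mul_continuousOn hg.continuousOn).norm.const_mul _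
  · refine Filter.Eventually.of_forall fun t ht => ?_
    rcases eq_or_ne t x with rfl | hne
    · simp [Real.zero_rpow (show -α ≠ 0 by linarith), hasSum_zero]
    · refine HasSum.mul_left _ (HasSum.mul_right _ ?_)
      have := hsum (t - x) (sub_ne_zero.2 hne)
      rw [dslope_of_ne _ hne, slope_def_field]
      simpa using this

/-- Leibniz rule for the classical Riemann–Liouville fractional derivative. -/
theorem leibniz_classical_RL
    (a b : ℝ) (hab : a < b) (α : ℝ) (hα0 : 0 < α) (hα1 : α < 1)
    (f g : ℝ → ℝ) (hf : EntireReal f) (hg : EntireReal g)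
    (x : ℝ) (hx : x ∈ Set.Ioo a b) :
    HasSum
      (fun m : ℕ => genBinom α m * iteratedDeriv m f x * rlD a (α - m) g x)
      (rlD a α (fun t => f t * g t) x) := by
  have hax := hx.1
  have hf1 := entire_contDiff hf
  have hg1 := entire_contDiff hg
  have hfd := hf1.differentiable (by norm_num)
  have hgd := hg1.differentiable (by norm_num)
  have hfc := hf1.continuous
  have hgc := hg1.continuous
  have hf'c : Continuous (deriv f) := hf1.continuous_deriv le_rfl
  have hg'c : Continuous (deriv g) := hg1.continuous_deriv le_rfl
  have hslope : Continuous (dslope f x) := by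
    rw [← continuousOn_univ, continuousOn_dslope Filter.univ_mem]
    exact ⟨hfc.continuousOn, hfd x⟩
  obtain ⟨D, hD, -⟩ := rl_deriv_scaled hα1 hax (fun t => (hgd t).hasDerivAt) hg'c
  have hV := rl_deriv_vanish hα0 hα1 hax (h := fun t => (f t - f x) * g t)
    (h' := fun t => deriv f t * g t + (f t - f x) * deriv g t)
    (k := fun t => - (dslope f x t * g t))
    (fun t => ((hfd t).hasDerivAt.sub_const (f x)).mul (hgd t).hasDerivAt)
    (by fun_prop) (by fun_prop)
    (fun t => by
      have := sub_smul_dslope f x t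
      rw [smul_eq_mul] at this
      rw [← this]; ring)
  have h1α : 1 - α ≠ 0 := by linarith
  have hrl : ∀ (h : ℝ → ℝ) (y : ℝ), rlI a (1 - α) h y
      = (Real.Gamma (1 - α))⁻¹ * ∫ t in a..y, (y - t) ^ (-α) * h t := by
    intro h y
    simp only [rlI, if_neg h1α]
    rw [show 1 - α - 1 = -α by ring]
  have hG : rlD a α g x = (Real.Gamma (1 - α))⁻¹ * D := by
    simp only [rlD, if_neg (not_le.2 hα0), hrl]
    exact (hD.const_mul _).deriv
  set S := ∫ t in a..x, (x - t) ^ (-α) * (dslope f x t * g t) with hS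
  have hFG : rlD a α (fun t => f t * g t) x
      = f x * ((Real.Gamma (1 - α))⁻¹ * D) + α * (Real.Gamma (1 - α))⁻¹ * S := by
    simp only [rlD, if_neg (not_le.2 hα0), hrl]
    have h3 := ((hD.const_mul (f x)).add hV).const_mul (Real.Gamma (1 - α))⁻¹
    have h4 := HasDerivAt.congr_of_eventuallyEq (f₁ := fun y => (Real.Gamma (1 - α))⁻¹ *
        ∫ t in a..y, (y - t) ^ (-α) * (f t * g t)) h3 (Filter.Eventually.of_forall fun y => by
      have hky := rl_kernel_integrable hα1 a y
      simp only [Pi.add_apply]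
      rw [← intervalIntegral.integral_const_mul (f x), ← intervalIntegral.integral_add
        ((hky.mul_continuousOn (by fun_prop)).const_mul _) (hky.mul_continuousOn (by fun_prop))]
      congr 2
      ext t
      ring)
    rw [h4.deriv]
    simp only [mul_neg, intervalIntegral.integral_neg]
    rw [← hS]
    ring
  rw [hFG, ← hasSum_nat_add_iff' 1]
  have hs := (rl_hasSum hα0 hα1 hax hf hgc).mul_left (α * (Real.Gamma (1 - α))⁻¹)
  refine hasSum_cast hs (fun m => ?_) ?_
  · have hm : (0:ℝ) ≤ m := m.cast_nonneg
    have e1 : ∫ t in a..x, (x - t) ^ (-α) *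
        (iteratedDeriv (m + 1) f x / ((m + 1).factorial : ℝ) * (t - x) ^ m * g t)
        = iteratedDeriv (m + 1) f x / ((m + 1).factorial : ℝ) * (-1) ^ m *
          ∫ t in a..x, (x - t) ^ (m - α) * g t := by
      rw [← intervalIntegral.integral_const_mul]
      apply intervalIntegral.integral_congr
      intro t ht
      rw [Set.uIcc_of_le hax.le] at ht
      have e2 : (x - t) ^ ((m:ℝ) - α) = (x - t) ^ (-α) * (x - t) ^ m := by
        rcases eq_or_ne t x with rfl | hne
        · have : (m:ℝ) - α ≠ 0 := by
            rcases Nat.eq_zero_or_pos m with rfl | hp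
            · simp; linarith
            · have : (1:ℝ) ≤ m := by exact_mod_cast hp
              linarith
          simp [Real.zero_rpow this, Real.zero_rpow (show -α ≠ 0 by linarith)]
        · rw [← Real.rpow_add_natCast (sub_ne_zero.2 hne.symm)]
          congr 1; ring
      simp only
      rw [e2, show t - x = (-1) * (x - t) by ring, mul_pow]
      ring
    rw [e1]
    have e3 : rlD a (α - ((m + 1 : ℕ) : ℝ)) g x
        = (Real.Gamma (m + 1 - α))⁻¹ * ∫ t in a..x, (x - t) ^ (m - α) * g t := by
      push_cast
      simp only [rlD, rlI]
      rw [if_pos (by linarith), if_neg (by intro h; linarith),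
        show -(α - ((m:ℝ) + 1)) = m + 1 - α by ring, show (m:ℝ) + 1 - α - 1 = m - α by ring]
    rw [e3]
    linear_combination (iteratedDeriv (m + 1) f x * ∫ t in a..x, (x - t) ^ (m - α) * g t) *
      genBinom_gamma hα1 m
  · simp [genBinom, hG, hS]
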